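/- For all planar binary trees u ∈ Y_p and v ∈ Y_q one has u/v ≤ u\v in the weak order on Y_{p+q}. -/

import Mathlib

/-- Planar binary trees: `leaf` is the tree `|` (no interior vertex) and
`node l r = l ∨ r` is the grafting of `l` and `r` (their roots are joined to a new
vertex, which becomes the root). -/
inductive PBTree : Type
  | leaf : PBTree
  | node : PBTree → PBTree → PBTree
deriving DecidableEq

/-- The number of interior vertices of a planar binary tree: `t ∈ Yₙ` iff `t.size = n`. -/
def PBTree.size : PBTree → ℕ
  | .leaf => 0
  | .node l r => l.size + r.size + 1

/-- The weak order on planar binary trees, generated transitively by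
(a) `u ≤ u' → v ≤ v' → u∨v ≤ u'∨v'` and (b) `(u∨v)∨w ≤ u∨(v∨w)`. -/
inductive TreeLe : PBTree → PBTree → Prop
  | refl (t : PBTree) : TreeLe t t
  | graft {u u' v v' : PBTree} : TreeLe u u' → TreeLe v v' →
      TreeLe (.node u v) (.node u' v')
  | rotate (u v w : PBTree) : TreeLe (.node (.node u v) w) (.node u (.node v w))
  | trans {a b c : PBTree} : TreeLe a b → TreeLe b c → TreeLe a c

/-- The `over` operation on trees: `u / v` is obtained by identifying the root of `u`
with the leftmost leaf of `v`; recursively `u / | = u` and `u / (vˡ∨vʳ) = (u/vˡ) ∨ vʳ`. -/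
def treeOver : PBTree → PBTree → PBTree
  | u, .leaf => u
  | u, .node vl vr => .node (treeOver u vl) vr

/-- The `under` operation on trees: `u \ v` is obtained by identifying the rightmost leaf
of `u` with the root of `v`; recursively `| \ v = v` and `(uˡ∨uʳ) \ v = uˡ ∨ (uʳ\v)`. -/
def treeUnder : PBTree → PBTree → PBTree
  | .leaf, v => v
  | .node ul ur, v => .node ul (treeUnder ur v)

theorem node_under_le (u a b : PBTree) :
    TreeLe (.node (treeUnder u a) b) (treeUnder u (.node a b)) := by
  induction u with
  | leaf => exact .refl _
  | node ul ur _ ih => exact .trans (.rotate _ _ _) (.graft (.refl _) ih)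

theorem under_leaf_eq (u : PBTree) : treeUnder u .leaf = u := by
  induction u with
  | leaf => rfl
  | node ul ur _ ih => simp only [treeUnder, ih]

/-- Lemma 2.3: for all planar binary trees `u ∈ Y_p` and `v ∈ Y_q` one
has `u/v ≤ u\v` in the weak order on `Y_{p+q}`. -/
theorem stmt11 (u v : PBTree) : TreeLe (treeOver u v) (treeUnder u v) := by
  induction v with
  | leaf => rw [under_leaf_eq]; exact .refl _
  | node vl vr ih _ => exact .trans (.graft ih (.refl _)) (node_under_le _ _ _)
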